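/- Let S, V, W be distinct states of a medium and suppose V = Sm, W = Vn, and S = Wτ for concise messages m and n and a token τ. Then τ ∉ C(n) and τ ∉ C(m), and exactly one of the following holds: (a) τ̃ ∈ C(m), the message nτ is concise for V, C(nτ) = C(m̃) (where m̃ is the reverse of m), and ℓ(m) = ℓ(n) + 1; or (b) τ̃ ∈ C(n), the message τm is concise for W, C(τm) = C(ñ) (where ñ is the reverse of n), and ℓ(n) = ℓ(m) + 1. In either case |ℓ(m) − ℓ(n)| = 1. -/

import Mathlib

open scoped Classical symmDiff

universe u

namespace Media

variable {S : Type u}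

/-- The state obtained by applying the message (string of tokens) `m` to the state `s`. -/
def apply (s : S) (m : List (S → S)) : S :=
  m.foldl (fun x τ => τ x) s

/-- The sequence of states `S₀ = s, S₁, …, Sₙ` produced by the message `m` from the state `s`. -/
def produced (s : S) (m : List (S → S)) : List S :=
  m.scanl (fun x τ => τ x) s

/-- `τ'` is a reverse of the token `τ`. -/
def IsReverse (τ τ' : S → S) : Prop :=
  ∀ P Q : S, P ≠ Q → (τ P = Q ↔ τ' Q = P)

/-- The message `m` is stepwise effective for the state `s`. -/
def StepwiseEffective (s : S) (m : List (S → S)) : Prop :=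
  List.Chain' (· ≠ ·) (produced s m)

/-- The message `m` is consistent: it does not contain both a token and its reverse. -/
def Consistent (m : List (S → S)) : Prop :=
  ∀ τ ∈ m, ∀ τ' ∈ m, ¬ IsReverse τ τ'

/-- The message `m` is concise for the state `s`. -/
def Concise (s : S) (m : List (S → S)) : Prop :=
  StepwiseEffective s m ∧ Consistent m ∧ m.Nodup

/-- The message `m` is vacuous: its indices can be partitioned into pairs of
mutually reverse tokens. -/
def Vacuous (m : List (S → S)) : Prop :=
  ∃ f : Fin m.length → Fin m.length, Function.Involutive f ∧
    (∀ i, f i ≠ i) ∧ ∀ i, IsReverse (m.get i) (m.get (f i))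

/-- The message `m` is closed for the state `s`. -/
def Closed (s : S) (m : List (S → S)) : Prop :=
  StepwiseEffective s m ∧ apply s m = s

/-- `(S, T)` is a medium: a token system satisfying axioms [M1] and [M2]. -/
def IsMedium (T : Set (S → S)) : Prop :=
  (∃ a b : S, a ≠ b) ∧ T.Nonempty ∧ (∀ τ ∈ T, τ ≠ id) ∧
  (∀ P Q : S, P ≠ Q →
    ∃ m : List (S → S), (∀ τ ∈ m, τ ∈ T) ∧ Concise P m ∧ apply P m = Q) ∧
  (∀ (P : S) (m : List (S → S)), (∀ τ ∈ m, τ ∈ T) → Closed P m → Vacuous m)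

end Media

open Media

namespace Media

theorem IsReverse.symm' {S : Type u} {a b : S → S} (h : IsReverse a b) : IsReverse b a :=
  fun P Q hPQ => (h Q P hPQ.symm).symm

theorem IsReverse.uniq {S : Type u} {a b c : S → S} (h : IsReverse a b) (h' : IsReverse a c) :
    b = c := by
  funext Q
  by_cases hb : b Q = Q
  · by_cases hc : c Q = Q
    · rw [hb, hc]
    · exact (h _ Q hc).1 ((h' _ Q hc).2 rfl)
  · exact ((h' _ Q hb).1 ((h _ Q hb).2 rfl)).symm

theorem Vacuous.count_eq {S : Type u} {l : List (S → S)} (h : Vacuous l) {a b : S → S}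
    (hab : IsReverse a b) : l.count a = l.count b := by
  obtain ⟨f, hf, -, hr⟩ := h
  have e : ∀ c, l.count c = (Finset.univ.filter (fun i => l.get i = c)).card := by
    intro c
    have := Fin.card_filter_univ_eq_vector_get_eq_count c (⟨l, rfl⟩ : List.Vector (S → S) l.length)
    rw [show l.count c = _ from this.symm]
    congr 1
  rw [e, e]
  refine Finset.card_bij (fun i _ => f i) ?_ (fun i _ j _ hij => hf.injective hij) ?_
  · intro i hi
    simp only [Finset.mem_filter, Finset.mem_univ, true_and] at hi ⊢
    have := hr i
    rw [hi] at this
    exact this.uniq hab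
  · intro j hj
    simp only [Finset.mem_filter, Finset.mem_univ, true_and] at hj
    refine ⟨f j, ?_, hf j⟩
    simp only [Finset.mem_filter, Finset.mem_univ, true_and]
    have := hr j
    rw [hj] at this
    exact this.uniq hab.symm'

theorem Vacuous.exists_rev {S : Type u} {l : List (S → S)} (h : Vacuous l) {a : S → S}
    (ha : a ∈ l) : ∃ b ∈ l, IsReverse a b := by
  obtain ⟨f, -, -, hr⟩ := h
  obtain ⟨i, rfl⟩ := List.get_of_mem ha
  exact ⟨_, List.get_mem _ _, hr i⟩

theorem Vacuous.last_rev {S : Type u} {l : List (S → S)} {a : S → S} (h : Vacuous (l ++ [a])) :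
    ∃ b ∈ l, IsReverse a b := by
  obtain ⟨f, -, hne, hr⟩ := h
  have hi : l.length < (l ++ [a]).length := by simp
  have h1 := hr ⟨l.length, hi⟩
  have h2 := hne ⟨l.length, hi⟩
  generalize f ⟨l.length, hi⟩ = j at h1 h2
  obtain ⟨j, hj⟩ := j
  have hj' : j < l.length := by
    have : j ≠ l.length := fun h => h2 (Fin.ext h)
    simp at hj
    omega
  refine ⟨l[j], List.getElem_mem _, ?_⟩
  simpa [List.getElem_append_left hj'] using h1

/-- The combinatorial core: `a`, `b` consistent without repetitions, `ab[t]` vacuous. -/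
theorem key {S : Type u} {a b l : List (S → S)} {t r : S → S}
    (hl : Vacuous l) (hc : ∀ x, l.count x = a.count x + b.count x + [t].count x)
    (ha : Consistent a) (hb : Consistent b) (han : a.Nodup) (hbn : b.Nodup)
    (hr : r ∈ a) (htr : IsReverse t r) :
    t ∉ a ∧ t ∉ b ∧ Consistent (t :: b) ∧
      (∀ x, (x ∈ b ∨ x = t) ↔ ∃ y ∈ a, IsReverse y x) ∧ a.length = b.length + 1 := by
  have hta : t ∉ a := fun h => ha t h r hr htr
  have htne : t ≠ r := fun h => hta (h ▸ hr)
  have hmem : ∀ x, x ∈ l ↔ x ∈ a ∨ x ∈ b ∨ x = t := by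
    intro x
    have := hc x
    rw [← List.count_pos_iff, this, ← List.count_pos_iff, ← List.count_pos_iff,
      ← List.mem_singleton (a := x), ← List.count_pos_iff]
    omega
  have h1 := hl.count_eq htr
  rw [hc, hc, List.count_eq_zero_of_not_mem hta, List.count_eq_one_of_mem han hr] at h1
  have h2 : [t].count t = 1 := by simp
  have h3 : [t].count r = 0 := by
    rw [List.count_eq_zero]; simpa using htne.symm
  have htb : t ∉ b := by
    intro h
    have : r ∈ b := by
      rw [← List.count_pos_iff] at h ⊢
      omega
    exact hb t h r this htr
  have hrb : r ∉ b := by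
    intro h
    apply htb
    rw [← List.count_pos_iff] at h ⊢
    omega
  have hset : ∀ x, (x ∈ b ∨ x = t) ↔ ∃ y ∈ a, IsReverse y x := by
    intro x
    constructor
    · rintro (h | rfl)
      · obtain ⟨y, hy, hxy⟩ := hl.exists_rev ((hmem x).2 (Or.inr (Or.inl h)))
        rcases (hmem y).1 hy with hy | hy | rfl
        · exact ⟨y, hy, hxy.symm'⟩
        · exact absurd hxy (hb x h y hy)
        · exact absurd (htr.uniq hxy.symm' ▸ h) hrb
      · exact ⟨r, hr, htr.symm'⟩
    · rintro ⟨y, hy, hyx⟩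
      have : x ∈ l := by
        rw [← List.count_pos_iff, ← hl.count_eq hyx, List.count_pos_iff, hmem]
        exact Or.inl hy
      rcases (hmem x).1 this with h | h
      · exact absurd hyx (ha y hy x h)
      · exact h
  refine ⟨hta, htb, ?_, hset, ?_⟩
  · intro x hx y hy hxy
    obtain ⟨x', hx', hxx⟩ := (hset x).1 (by simpa [or_comm] using hx)
    obtain ⟨y', hy', hyy⟩ := (hset y).1 (by simpa [or_comm] using hy)
    have e1 : x' = y := hxx.symm'.uniq hxy
    have e2 : y' = x := hyy.symm'.uniq hxy.symm'
    subst e1 e2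
    exact ha _ hx' _ hy' hxx
  · have hex : ∀ y ∈ a, ∃ x, IsReverse y x := fun y hy => by
      obtain ⟨x, -, h⟩ := hl.exists_rev ((hmem y).2 (Or.inl hy))
      exact ⟨x, h⟩
    choose! g hg using hex
    have hp : (a.map g).Perm (t :: b) := by
      rw [List.perm_ext_iff_of_nodup]
      · intro x
        rw [List.mem_cons, or_comm, hset, List.mem_map]
        constructor
        · rintro ⟨y, hy, rfl⟩
          exact ⟨y, hy, hg y hy⟩
        · rintro ⟨y, hy, h⟩
          exact ⟨y, hy, (hg y hy).uniq h⟩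
      · refine List.Nodup.map_on ?_ han
        intro x hx y hy hxy
        exact (hg x hx).symm'.uniq (hxy ▸ (hg y hy).symm')
      · exact List.nodup_cons.2 ⟨htb, hbn⟩
    simpa using hp.length_eq

theorem stepwise_cons {S : Type u} (s : S) (t : S → S) (m : List (S → S)) :
    StepwiseEffective s (t :: m) ↔ s ≠ t s ∧ StepwiseEffective (t s) m := by
  unfold StepwiseEffective produced
  rw [List.scanl_cons]
  cases m <;> simp [List.Chain', List.scanl_cons]

theorem stepwise_append {S : Type u} (s : S) (m n : List (S → S)) :
    StepwiseEffective s (m ++ n) ↔ StepwiseEffective s m ∧ StepwiseEffective (apply s m) n := by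
  induction m generalizing s with
  | nil => simp [StepwiseEffective, produced, apply, List.Chain']
  | cons t m ih =>
    rw [List.cons_append, stepwise_cons, stepwise_cons, ih, and_assoc]
    rfl

theorem stepwise_single {S : Type u} (s : S) (t : S → S) :
    StepwiseEffective s [t] ↔ s ≠ t s := by
  rw [stepwise_cons]; simp [StepwiseEffective, produced, List.Chain']

end Media

/-- Lemma 5.6: let `s, v, w` be distinct states of a medium with `v = s·m`,
`w = v·n`, `s = w·τ` for concise messages `m`, `n` and a token `τ`. Then
`τ ∉ C(n)`, `τ ∉ C(m)`, and exactly one of the following holds: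
(a) `τ̃ ∈ C(m)`, `nτ` is concise for `v`, `C(nτ) = C(m̃)` and `ℓ(m) = ℓ(n) + 1`; or
(b) `τ̃ ∈ C(n)`, `τm` is concise for `w`, `C(τm) = C(ñ)` and `ℓ(n) = ℓ(m) + 1`.
In either case `|ℓ(m) − ℓ(n)| = 1`. -/
theorem concise_triangle_token {S : Type u} {T : Set (S → S)} (hM : IsMedium T)
    (s v w : S) (hsv : s ≠ v) (hvw : v ≠ w) (hsw : s ≠ w)
    (m n : List (S → S)) (τ : S → S)
    (hm : ∀ σ ∈ m, σ ∈ T) (hn : ∀ σ ∈ n, σ ∈ T) (hτ : τ ∈ T)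
    (hmc : Concise s m) (hsm : apply s m = v)
    (hnc : Concise v n) (hvn : apply v n = w)
    (hwτ : τ w = s) :
    τ ∉ m ∧ τ ∉ n ∧
    Xor'
      ((∃ ρ ∈ m, IsReverse τ ρ) ∧ Concise v (n ++ [τ]) ∧
        {σ | σ ∈ n ++ [τ]} = {σ | ∃ ρ ∈ m, IsReverse ρ σ} ∧
        m.length = n.length + 1)
      ((∃ ρ ∈ n, IsReverse τ ρ) ∧ Concise w (τ :: m) ∧
        {σ | σ ∈ τ :: m} = {σ | ∃ ρ ∈ n, IsReverse ρ σ} ∧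
        n.length = m.length + 1) ∧
    ((m.length : ℤ) - (n.length : ℤ)).natAbs = 1 := by
  obtain ⟨hm1, hm2, hm3⟩ := hmc
  obtain ⟨hn1, hn2, hn3⟩ := hnc
  have hw : w ≠ τ w := by rw [hwτ]; exact hsw.symm
  have hnτ : StepwiseEffective v (n ++ [τ]) := by
    rw [stepwise_append, hvn, stepwise_single]; exact ⟨hn1, hw⟩
  have hτm : StepwiseEffective w (τ :: m) := by
    rw [stepwise_cons, hwτ]; exact ⟨hwτ ▸ hw, hm1⟩
  have hvac : Vacuous ((m ++ n) ++ [τ]) := by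
    apply hM.2.2.2.2 s
    · intro σ hσ
      simp only [List.mem_append, List.mem_singleton] at hσ
      rcases hσ with (h | h) | rfl
      exacts [hm _ h, hn _ h, hτ]
    · refine ⟨?_, ?_⟩
      · rw [List.append_assoc, stepwise_append, hsm]; exact ⟨hm1, hnτ⟩
      · have e1 : apply s (m ++ n ++ [τ]) = τ (apply (apply s m) n) := by simp [Media.apply]
        rw [e1, hsm, hvn, hwτ]
  obtain ⟨r, hr, hτr⟩ := hvac.last_rev
  rcases List.mem_append.1 hr with hr | hr
  · obtain ⟨h1, h2, h3, h4, h5⟩ := key hvac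
      (fun x => by rw [List.count_append, List.count_append]) hm2 hn2 hm3 hn3 hr hτr
    refine ⟨h1, h2, Or.inl ⟨⟨⟨r, hr, hτr⟩, ⟨hnτ, ?_, ?_⟩, ?_, h5⟩, fun h => ?_⟩, by omega⟩
    · intro x hx y hy
      exact h3 x (by simpa [or_comm] using hx) y (by simpa [or_comm] using hy)
    · rw [List.nodup_append_comm]; simpa using ⟨h2, hn3⟩
    · ext x
      rw [Set.mem_setOf_eq, Set.mem_setOf_eq, ← h4 x]; simp
    · have := h.2.2.2
      omega
  · obtain ⟨h1, h2, h3, h4, h5⟩ := key hvac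
      (fun x => by rw [List.count_append, List.count_append, Nat.add_comm (n.count x)])
      hn2 hm2 hn3 hm3 hr hτr
    refine ⟨h2, h1, Or.inr ⟨⟨⟨r, hr, hτr⟩, ⟨hτm, h3, ?_⟩, ?_, h5⟩, fun h => ?_⟩, by omega⟩
    · exact List.nodup_cons.2 ⟨h2, hm3⟩
    · ext x
      rw [Set.mem_setOf_eq, Set.mem_setOf_eq, ← h4 x]; simp [or_comm]
    · have := h.2.2.2
      omega
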